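/- Let k ≤ n and let X_{i_1,j_1}, …, X_{i_k,j_k} be pairwise distinct indecomposable representations of Q_ε. The set {X_{i_1,j_1}, …, X_{i_k,j_k}} is an exceptional collection if and only if the set of chords d = {{i_1,j_1}, …, {i_k,j_k}} is a strand diagram, i.e. no two chords of d cross and the graph on vertex set {0,…,n} with edge set d is a forest. Consequently, the assignment X_{i,j} ↦ {i,j} induces a bijection from the set of exceptional collections of Q_ε with k elements to the set of strand diagrams with k strands. -/

import Mathlib

namespace ESPaper

/-- Source of arrow `a m` (between vertices `m` and `m+1`): `m` if `ε m = +` (true). -/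
def asrc (ε : ℕ → Bool) (m : ℕ) : ℕ := if ε m then m else m + 1

/-- Target of arrow `a m`. -/
def atgt (ε : ℕ → Bool) (m : ℕ) : ℕ := if ε m then m + 1 else m

/-- A representation of the type `A_n` quiver `Q_ε`: finite dimensional vector spaces at the
vertices `1, …, n` (the spaces at the remaining indices are required to be trivial, so that
the maps attached to indices outside `1, …, n-1` carry no information) together with a
linear map along each arrow `a m : asrc ε m → atgt ε m`, `1 ≤ m ≤ n-1`. -/
structure Rep (K : Type) [Field K] (n : ℕ) (ε : ℕ → Bool) : Type 1 where
  V : ℕ → Type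
  [instAdd : ∀ m, AddCommGroup (V m)]
  [instMod : ∀ m, Module K (V m)]
  [instFin : ∀ m, FiniteDimensional K (V m)]
  triv : ∀ m, m = 0 ∨ n < m → Subsingleton (V m)
  φ : ∀ m, V (asrc ε m) →ₗ[K] V (atgt ε m)

attribute [instance] Rep.instAdd Rep.instMod Rep.instFin

/-- A morphism of representations of `Q_ε`. -/
structure RepHom {K : Type} [Field K] {n : ℕ} {ε : ℕ → Bool} (A B : Rep K n ε) where
  app : ∀ m, A.V m →ₗ[K] B.V m
  comm : ∀ m, (app (atgt ε m)).comp (A.φ m) = (B.φ m).comp (app (asrc ε m))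

/-- Vertex space of the indecomposable `X_{i,j}` (for `0 ≤ i < j ≤ n`): `K` at the
vertices `i+1, …, j` and `0` elsewhere. -/
def XV (K : Type) [Field K] (n i j m : ℕ) : Submodule K K :=
  if i + 1 ≤ m ∧ m ≤ j ∧ m ≤ n then ⊤ else ⊥

/-- Arrow map of the indecomposable `X_{i,j}`: the identity whenever both endpoints of the
arrow lie in the support, and zero otherwise. -/
def Xφ (K : Type) [Field K] (n : ℕ) (ε : ℕ → Bool) (i j m : ℕ) :
    XV K n i j (asrc ε m) →ₗ[K] XV K n i j (atgt ε m) :=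
  if h : i + 1 ≤ atgt ε m ∧ atgt ε m ≤ j ∧ atgt ε m ≤ n then
    LinearMap.codRestrict _ (XV K n i j (asrc ε m)).subtype
      (fun x => by simp [XV, h.1, h.2.1, h.2.2])
  else 0

/-- The indecomposable representation `X_{i,j}` of `Q_ε`. -/
def Xrep (K : Type) [Field K] (n : ℕ) (ε : ℕ → Bool) (i j : ℕ) : Rep K n ε where
  V m := XV K n i j m
  instAdd _ := inferInstance
  instMod _ := inferInstance
  instFin _ := inferInstance
  triv m hm := by
    have hneg : ¬ (i + 1 ≤ m ∧ m ≤ j ∧ m ≤ n) := by omega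
    have hbot : XV K n i j m = ⊥ := by unfold XV; rw [if_neg hneg]
    show Subsingleton (XV K n i j m)
    rw [hbot]
    infer_instance
  φ m := Xφ K n ε i j m

variable {K : Type} [Field K]

/-- `Hom(A, B) = 0`. -/
def homZero {n : ℕ} {ε : ℕ → Bool} (A B : Rep K n ε) : Prop :=
  ∀ θ : RepHom A B, ∀ m, θ.app m = 0

/-- `Hom(A, B) ≠ 0`. -/
def homNonzero {n : ℕ} {ε : ℕ → Bool} (A B : Rep K n ε) : Prop :=
  ∃ θ : RepHom A B, ∃ m, θ.app m ≠ 0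

/-- `0 → B → E → A → 0` is a short exact sequence. -/
def IsSES {n : ℕ} {ε : ℕ → Bool} {B E A : Rep K n ε}
    (f : RepHom B E) (g : RepHom E A) : Prop :=
  (∀ m, Function.Injective (f.app m)) ∧ (∀ m, Function.Surjective (g.app m)) ∧
    (∀ m, LinearMap.range (f.app m) = LinearMap.ker (g.app m))

/-- The short exact sequence `0 → B → E → A → 0` splits. -/
def Splits {n : ℕ} {ε : ℕ → Bool} {E A : Rep K n ε} (g : RepHom E A) : Prop :=
  ∃ s : RepHom A E, ∀ m, (g.app m).comp (s.app m) = LinearMap.id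

/-- `Ext¹(A, B) ≠ 0`: there is a nonsplit short exact sequence `0 → B → E → A → 0`. -/
def extNonzero {n : ℕ} {ε : ℕ → Bool} (A B : Rep K n ε) : Prop :=
  ∃ (E : Rep K n ε) (f : RepHom B E) (g : RepHom E A), IsSES f g ∧ ¬ Splits g

/-- `Ext¹(A, B) = 0`. -/
def extZero {n : ℕ} {ε : ℕ → Bool} (A B : Rep K n ε) : Prop := ¬ extNonzero A B

/-- `(U, V)` is an exceptional pair: `Hom(V,U) = 0` and `Ext¹(V,U) = 0`. -/
def ExcPair {n : ℕ} {ε : ℕ → Bool} (U V : Rep K n ε) : Prop := homZero V U ∧ extZero V U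


/-- The chords `c = {c.1, c.2}` and `d = {d.1, d.2}` (with `c.1 < c.2`, `d.1 < d.2`) cross. -/
def Crosses (ε : ℕ → Bool) (c d : ℕ × ℕ) : Prop :=
  (c.1 < d.1 ∧ d.1 < c.2 ∧ c.2 < d.2 ∧ ε d.1 = ε c.2) ∨
  (d.1 < c.1 ∧ c.1 < d.2 ∧ d.2 < c.2 ∧ ε c.1 = ε d.2) ∨
  (c.1 < d.1 ∧ d.1 < d.2 ∧ d.2 < c.2 ∧ ε d.1 ≠ ε d.2) ∨
  (d.1 < c.1 ∧ c.1 < c.2 ∧ c.2 < d.2 ∧ ε c.1 ≠ ε c.2)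

/-- The chords `c` and `d` share an endpoint. -/
def SharesEndpoint (c d : ℕ × ℕ) : Prop :=
  c.1 = d.1 ∨ c.1 = d.2 ∨ c.2 = d.1 ∨ c.2 = d.2

/-- The chord `c` is clockwise from the chord `d` (chords written with `c.1 < c.2`, `d.1 < d.2`). -/
def Cw (ε : ℕ → Bool) (c d : ℕ × ℕ) : Prop :=
  (c.2 = d.1 ∧ ε c.2 = true) ∨
  (d.2 = c.1 ∧ ε c.1 = false) ∨
  (c.1 = d.1 ∧ ((c.2 < d.2 ∧ ε c.2 = false) ∨ (d.2 < c.2 ∧ ε d.2 = true))) ∨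
  (c.2 = d.2 ∧ ((c.1 < d.1 ∧ ε d.1 = false) ∨ (d.1 < c.1 ∧ ε c.1 = true)))

/-- The graph on `{0,…,n} ⊆ ℕ` determined by a finite set of chords. -/
def chordGraph (d : Finset (ℕ × ℕ)) : SimpleGraph ℕ :=
  SimpleGraph.fromEdgeSet {e : Sym2 ℕ | ∃ c ∈ d, e = s(c.1, c.2)}

/-- The graph on `{0,…,n} ⊆ ℕ` determined by a family of chords. -/
def chordGraphF {k : ℕ} (c : Fin k → ℕ × ℕ) : SimpleGraph ℕ :=
  SimpleGraph.fromEdgeSet {e : Sym2 ℕ | ∃ a : Fin k, e = s((c a).1, (c a).2)}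

/-- `d` is a strand diagram on `S_{n,ε}`: valid pairwise-noncrossing chords forming a forest. -/
def IsDiagram (n : ℕ) (ε : ℕ → Bool) (d : Finset (ℕ × ℕ)) : Prop :=
  (∀ c ∈ d, c.1 < c.2 ∧ c.2 ≤ n) ∧
  (∀ c ∈ d, ∀ c' ∈ d, ¬ Crosses ε c c') ∧
  (chordGraph d).IsAcyclic

/-- The family `c` is a strand diagram (pairwise-noncrossing chords forming a forest). -/
def IsDiagramF {k : ℕ} (ε : ℕ → Bool) (c : Fin k → ℕ × ℕ) : Prop :=
  (∀ a b : Fin k, ¬ Crosses ε (c a) (c b)) ∧ (chordGraphF c).IsAcyclic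

/-- The partial order of the poset `P_d`: `x ≤ y` iff there is a chain of chords of `d`
from `x` to `y` in which each chord shares an endpoint with, and is clockwise from,
the previous one. -/
def leD (ε : ℕ → Bool) (d : Finset (ℕ × ℕ)) : ℕ × ℕ → ℕ × ℕ → Prop :=
  Relation.ReflTransGen (fun x y => x ∈ d ∧ y ∈ d ∧ SharesEndpoint x y ∧ Cw ε y x)

/-- The sequence `(X_{c 0}, …, X_{c (k-1)})` of indecomposables is an exceptional sequence. -/
def IsExcSeq (K : Type) [Field K] (n : ℕ) {k : ℕ} (ε : ℕ → Bool) (c : Fin k → ℕ × ℕ) : Prop :=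
  ∀ a b : Fin k, a < b →
    ExcPair (Xrep K n ε (c a).1 (c a).2) (Xrep K n ε (c b).1 (c b).2)

/-- The set of indecomposables `{X_e : e ∈ d}` is an exceptional collection, i.e. it can be
ordered into an exceptional sequence. -/
def IsExcColl (K : Type) [Field K] (n : ℕ) (ε : ℕ → Bool) (d : Finset (ℕ × ℕ)) : Prop :=
  ∃ c : Fin d.card → ℕ × ℕ, Function.Injective c ∧ (∀ a, c a ∈ d) ∧ IsExcSeq K n ε c

def Lok (ε : ℕ → Bool) (c d : ℕ × ℕ) : Prop :=
  c.1 = d.1 ∨ (c.1 < d.1 ∧ ε d.1 = false) ∨ (d.1 < c.1 ∧ ε c.1 = true)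

def Rok (ε : ℕ → Bool) (c d : ℕ × ℕ) : Prop :=
  c.2 = d.2 ∨ (d.2 < c.2 ∧ ε d.2 = true) ∨ (c.2 < d.2 ∧ ε c.2 = false)

def Ov (c d : ℕ × ℕ) : Prop := c.1 < d.2 ∧ d.1 < c.2

def HN (ε : ℕ → Bool) (c d : ℕ × ℕ) : Prop := Ov c d ∧ Lok ε c d ∧ Rok ε c d

def EN (ε : ℕ → Bool) (c d : ℕ × ℕ) : Prop :=
  (Ov c d ∧ ¬ Lok ε c d ∧ ¬ Rok ε c d) ∨
    (c.2 = d.1 ∧ ε c.2 = true) ∨ (d.2 = c.1 ∧ ε c.1 = false)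

def NN (ε : ℕ → Bool) (c d : ℕ × ℕ) : Prop := HN ε c d ∨ EN ε c d

theorem cross_NN (ε : ℕ → Bool) (c d : ℕ × ℕ) (h : Crosses ε c d) : NN ε c d ∧ NN ε d c := by
  obtain ⟨i, j⟩ := c
  obtain ⟨k, l⟩ := d
  simp only [Crosses, NN, HN, EN, Ov, Lok, Rok] at *
  rcases h with h | h | h | h <;> cases hi : ε i <;> cases hj : ε j <;> cases hk : ε k <;>
    cases hl : ε l <;> simp_all <;> omega

theorem NN_share (ε : ℕ → Bool) (c d : ℕ × ℕ) (hc : c.1 < c.2) (hd : d.1 < d.2) (hne : c ≠ d)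
    (h : ¬ Crosses ε c d) (hN : NN ε c d) : SharesEndpoint c d := by
  obtain ⟨i, j⟩ := c
  obtain ⟨k, l⟩ := d
  simp only [NN, HN, EN, Ov, Lok, Rok, Crosses, SharesEndpoint] at *
  grind

theorem NN_asymm (ε : ℕ → Bool) (c d : ℕ × ℕ) (hc : c.1 < c.2) (hd : d.1 < d.2) (hne : c ≠ d)
    (h : ¬ Crosses ε c d) (hN : NN ε c d) : ¬ NN ε d c := by
  obtain ⟨i, j⟩ := c
  obtain ⟨k, l⟩ := d
  simp only [NN, HN, EN, Ov, Lok, Rok, Crosses, SharesEndpoint] at *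
  grind

theorem NN_trans (ε : ℕ → Bool) (v : ℕ) (c d e : ℕ × ℕ) (hc : c.1 < c.2) (hd : d.1 < d.2)
    (he : e.1 < e.2) (h1 : c ≠ d) (h2 : d ≠ e) (h3 : c ≠ e)
    (vc : c.1 = v ∨ c.2 = v) (vd : d.1 = v ∨ d.2 = v) (ve : e.1 = v ∨ e.2 = v)
    (hN : NN ε c d) (hN' : NN ε d e) : NN ε c e := by
  obtain ⟨i, j⟩ := c
  obtain ⟨k, l⟩ := d
  obtain ⟨p, q⟩ := e
  simp only [NN, HN, EN, Ov, Lok, Rok, Crosses, SharesEndpoint] at *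
  rcases vc with rfl | rfl <;> rcases vd with rfl | rfl <;> rcases ve with rfl | rfl <;> grind

def HH (ε : ℕ → Bool) (a b : ℕ) : ℚ :=
  if a = b then 1 else if b < a then (if ε b then 1 else 0) else (if ε a then 0 else 1)

def EE (ε : ℕ → Bool) (c d : ℕ × ℕ) : ℚ :=
  HH ε c.2 d.2 - HH ε c.1 d.2 - HH ε c.2 d.1 + HH ε c.1 d.1

theorem EE_self (ε : ℕ → Bool) (c : ℕ × ℕ) (hc : c.1 < c.2) : EE ε c c = 1 := by
  simp only [EE, HH]
  grind

theorem EE_zero (ε : ℕ → Bool) (c d : ℕ × ℕ) (hc : c.1 < c.2) (hd : d.1 < d.2)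
    (h : ¬ NN ε c d) : EE ε c d = 0 := by
  obtain ⟨i, j⟩ := c
  obtain ⟨k, l⟩ := d
  simp only [NN, HN, EN, Ov, Lok, Rok, EE, HH] at *
  grind

noncomputable def bb (c : ℕ × ℕ) : ℕ →₀ ℚ := Finsupp.single c.2 1 - Finsupp.single c.1 1

noncomputable def BB (ε : ℕ → Bool) : (ℕ →₀ ℚ) →ₗ[ℚ] (ℕ →₀ ℚ) →ₗ[ℚ] ℚ :=
  Finsupp.linearCombination ℚ (fun a => Finsupp.linearCombination ℚ (fun b => HH ε a b))

theorem BB_bb (ε : ℕ → Bool) (c d : ℕ × ℕ) : BB ε (bb c) (bb d) = EE ε c d := by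
  simp [BB, bb, EE]
  ring

theorem bb_indep (ε : ℕ → Bool) {k : ℕ} (c : Fin k → ℕ × ℕ) (hc : ∀ a, (c a).1 < (c a).2)
    (h : ∀ a b, a < b → ¬ NN ε (c b) (c a)) : LinearIndependent ℚ (fun a => bb (c a)) := by
  rw [Fintype.linearIndependent_iff]
  intro g hg i
  induction i using WellFoundedGT.induction with
  | ind i ih =>
    have h1 : BB ε (bb (c i)) (∑ j, g j • bb (c j)) = 0 := by rw [hg]; simp
    rw [map_sum, Finset.sum_eq_single i] at h1
    · simpa [BB_bb, EE_self ε _ (hc i)] using h1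
    · intro j _ hj
      rcases lt_or_gt_of_ne hj with hj | hj
      · simp [BB_bb, EE_zero ε _ _ (hc i) (hc j) (h j i hj)]
      · simp [ih j hj]
    · simp

theorem reach_span (d : Finset (ℕ × ℕ)) (G : SimpleGraph ℕ)
    (hG : ∀ u v, G.Adj u v → (u, v) ∈ d ∨ (v, u) ∈ d) (u v : ℕ) (h : G.Reachable u v) :
    bb (u, v) ∈ Submodule.span ℚ (bb '' (d : Set (ℕ × ℕ))) := by
  obtain ⟨w⟩ := h
  induction w with
  | nil => simp [bb]
  | @cons a b c hab w ih =>
    have e : bb (a, c) = bb (a, b) + bb (b, c) := by simp [bb]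
    rw [e]
    refine Submodule.add_mem _ ?_ ih
    rcases hG _ _ hab with h | h
    · exact Submodule.subset_span ⟨_, h, rfl⟩
    · have e : bb (a, b) = - bb (b, a) := by simp [bb]
      rw [e]
      exact Submodule.neg_mem _ (Submodule.subset_span ⟨_, h, rfl⟩)

theorem chordGraph_adj (d : Finset (ℕ × ℕ)) (hd : ∀ c ∈ d, c.1 < c.2) (u v : ℕ) :
    (chordGraph d).Adj u v ↔ (u, v) ∈ d ∨ (v, u) ∈ d := by
  simp only [chordGraph, SimpleGraph.fromEdgeSet_adj, Set.mem_ofPred_eq]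
  constructor
  · rintro ⟨⟨c, hc, h⟩, _⟩
    rw [Sym2.eq_iff] at h
    rcases h with ⟨rfl, rfl⟩ | ⟨rfl, rfl⟩
    · exact Or.inl hc
    · exact Or.inr hc
  · rintro (h | h)
    · exact ⟨⟨_, h, rfl⟩, (hd _ h).ne⟩
    · exact ⟨⟨_, h, Sym2.eq_swap⟩, (hd _ h).ne'⟩

theorem forest_of_seq (ε : ℕ → Bool) (d : Finset (ℕ × ℕ)) (hd : ∀ c ∈ d, c.1 < c.2)
    (c : Fin d.card → ℕ × ℕ) (hinj : Function.Injective c) (hmem : ∀ a, c a ∈ d)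
    (h : ∀ a b, a < b → ¬ NN ε (c b) (c a)) : (chordGraph d).IsAcyclic := by
  have himg : Finset.univ.image c = d := by
    apply Finset.eq_of_subset_of_card_le
    · intro x hx
      obtain ⟨a, _, rfl⟩ := Finset.mem_image.1 hx
      exact hmem a
    · rw [Finset.card_image_of_injective _ hinj]; simp
  have hli := bb_indep ε c (fun a => hd _ (hmem a)) h
  rw [SimpleGraph.isAcyclic_iff_forall_adj_isBridge]
  have key : ∀ u v, (u, v) ∈ d → ¬ ((chordGraph d) \ SimpleGraph.fromEdgeSet {s(u, v)}).Reachable u v := by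
    intro u v huv hr
    have hs := reach_span (d.erase (u, v)) _ (fun a b hab => by
      rw [SimpleGraph.sdiff_adj, chordGraph_adj d hd, SimpleGraph.fromEdgeSet_adj] at hab
      have := hab.1
      have h2 := hab.2
      simp only [Finset.mem_erase]
      simp at h2
      grind) u v hr
    rw [← himg, Finset.mem_image] at huv
    obtain ⟨a, _, ha⟩ := huv
    have h3 := hli.notMem_span_image (s := {a}ᶜ) (x := a) (by simp)
    apply h3
    have : (fun a => bb (c a)) '' {a}ᶜ = bb '' ((d.erase (u, v) : Finset _) : Set (ℕ × ℕ)) := by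
      rw [← ha]
      ext x
      simp only [Set.mem_image, Set.mem_compl_iff, Set.mem_singleton_iff, Finset.coe_erase,
        Set.mem_sdiff, Finset.mem_coe]
      constructor
      · rintro ⟨b, hb, rfl⟩
        exact ⟨c b, ⟨hmem b, fun h => hb (hinj h)⟩, rfl⟩
      · rintro ⟨y, ⟨hy, hb⟩, rfl⟩
        have hy' : y ∈ Finset.univ.image c := by rw [himg]; exact hy
        obtain ⟨b, _, rfl⟩ := Finset.mem_image.1 hy'
        exact ⟨b, fun h => hb (by rw [h]), rfl⟩
    rw [this]
    change bb (c a) ∈ _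
    rw [ha]
    exact hs
  intro u v huv
  rw [SimpleGraph.isBridge_iff]
  rcases (chordGraph_adj d hd u v).1 huv with h1 | h1
  · exact key u v h1
  · intro h2
    rw [Sym2.eq_swap] at h2
    exact key v u h1 h2.symm

def RR (ε : ℕ → Bool) (d : Finset (ℕ × ℕ)) (x y : ℕ × ℕ) : Prop :=
  x ∈ d ∧ y ∈ d ∧ x ≠ y ∧ NN ε x y

theorem transGen_insert {α : Type*} (R R' : α → α → Prop) (e : α)
    (hR : ∀ x y, R' x y → x ≠ e → y ≠ e → R x y) (hRe : ∀ x, ¬ R x e) (hirr : ¬ R' e e)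
    (hac : ∀ x, ¬ Relation.TransGen R x x)
    (hK : ∀ f g, R' e f → R' g e → Relation.ReflTransGen R f g → False) :
    ∀ x, ¬ Relation.TransGen R' x x := by
  have claim : ∀ x y, Relation.TransGen R' x y → Relation.TransGen R x y ∨
      ((x = e ∨ ∃ g, Relation.ReflTransGen R x g ∧ R' g e) ∧
        (y = e ∨ ∃ f, R' e f ∧ Relation.ReflTransGen R f y)) := by
    intro x y h
    induction h with
    | single h =>
      rename_i y
      by_cases hx : x = e
      · subst hx
        exact Or.inr ⟨Or.inl rfl, Or.inr ⟨_, h, .refl⟩⟩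
      · by_cases hy : y = e
        · subst hy
          exact Or.inr ⟨Or.inr ⟨_, .refl, h⟩, Or.inl rfl⟩
        · exact Or.inl (.single (hR _ _ h hx hy))
    | tail h1 h ih =>
      rename_i y z
      by_cases hz : z = e
      · subst hz
        refine Or.inr ⟨?_, Or.inl rfl⟩
        rcases ih with ih | ih
        · exact Or.inr ⟨_, ih.to_reflTransGen, h⟩
        · exact ih.1
      · by_cases hy : y = e
        · subst hy
          rcases ih with ih | ih
          · exfalso
            cases ih with
            | single h3 => exact hRe _ h3
            | tail h3 h4 => exact hRe _ h4
          · exact Or.inr ⟨ih.1, Or.inr ⟨_, h, .refl⟩⟩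
        · rcases ih with ih | ⟨h1, h2⟩
          · exact Or.inl (ih.tail (hR _ _ h hy hz))
          · refine Or.inr ⟨h1, ?_⟩
            rcases h2 with h2 | ⟨f, hf, h3⟩
            · exact absurd h2 hy
            · exact Or.inr ⟨f, hf, h3.tail (hR _ _ h hy hz)⟩
  have main : ∀ x, x ≠ e → ¬ Relation.TransGen R' x x := by
    intro x hx h
    rcases claim x x h with h | ⟨h1, h2⟩
    · exact hac x h
    · rcases h1 with h1 | ⟨g, h1, h3⟩
      · exact hx h1
      · rcases h2 with h2 | ⟨f, h2, h4⟩
        · exact hx h2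
        · exact hK f g h2 h3 (h4.trans h1)
  intro x h
  by_cases hx : x = e
  · subst hx
    rw [Relation.TransGen.head'_iff] at h
    obtain ⟨z, hz, h⟩ := h
    by_cases hzx : z = x
    · subst hzx; exact hirr hz
    · exact main z hzx (Relation.TransGen.tail' h hz)
  · exact main x hx h

theorem reach_of_RTG (ε : ℕ → Bool) (d : Finset (ℕ × ℕ)) (hd : ∀ c ∈ d, c.1 < c.2)
    (hx : ∀ c ∈ d, ∀ c' ∈ d, ¬ Crosses ε c c') (f g : ℕ × ℕ) (hf : f ∈ d)
    (h : Relation.ReflTransGen (RR ε d) f g) :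
    g ∈ d ∧ (chordGraph d).Reachable f.1 g.1 := by
  induction h with
  | refl => exact ⟨hf, .refl _⟩
  | @tail a b _ h ih =>
    refine ⟨h.2.1, ih.2.trans ?_⟩
    obtain ⟨h1, h2, h3, h4⟩ := h
    have e : ∀ c ∈ d, (chordGraph d).Reachable c.1 c.2 := fun c hc =>
      ((chordGraph_adj d hd _ _).2 (Or.inl hc)).reachable
    rcases NN_share ε a b (hd _ h1) (hd _ h2) h3 (hx _ h1 _ h2) h4 with h | h | h | h
    · rw [h]
    · rw [h]; exact (e b h2).symm
    · rw [← h]; exact e a h1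
    · exact (e a h1).trans (h ▸ (e b h2).symm)

theorem acyclic_of_diagram (ε : ℕ → Bool) (d : Finset (ℕ × ℕ)) :
    (∀ c ∈ d, c.1 < c.2) → (∀ c ∈ d, ∀ c' ∈ d, ¬ Crosses ε c c') → (chordGraph d).IsAcyclic →
    ∀ x, ¬ Relation.TransGen (RR ε d) x x := by
  induction d using Finset.induction_on with
  | empty =>
    intro _ _ _ x h
    rw [Relation.TransGen.head'_iff] at h
    obtain ⟨z, hz, h⟩ := h
    simp [RR] at hz
  | insert e d he ih =>
    intro hd hx hac
    have hd' : ∀ c ∈ d, c.1 < c.2 := fun c hc => hd c (Finset.mem_insert_of_mem hc)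
    have hx' : ∀ c ∈ d, ∀ c' ∈ d, ¬ Crosses ε c c' := fun c hc c' hc' =>
      hx c (Finset.mem_insert_of_mem hc) c' (Finset.mem_insert_of_mem hc')
    have hed := hd e (Finset.mem_insert_self _ _)
    have hadj : ∀ u v, (chordGraph d).Adj u v →
        ((chordGraph (insert e d)) \ SimpleGraph.fromEdgeSet {s(e.1, e.2)}).Adj u v := by
      intro u v h
      rw [chordGraph_adj d hd'] at h
      rw [SimpleGraph.sdiff_adj, chordGraph_adj _ hd, SimpleGraph.fromEdgeSet_adj]
      refine ⟨by simp only [Finset.mem_insert]; tauto, ?_⟩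
      rintro ⟨h1, _⟩
      rw [Set.mem_singleton_iff, Sym2.eq_iff] at h1
      rcases h1 with ⟨rfl, rfl⟩ | ⟨rfl, rfl⟩
      · rcases h with h | h
        · exact he h
        · have := hd' _ h
          simp at this; omega
      · rcases h with h | h
        · have := hd' _ h
          simp at this; omega
        · exact he h
    have hle : chordGraph d ≤ (chordGraph (insert e d)) \ SimpleGraph.fromEdgeSet {s(e.1, e.2)} :=
      fun u v h => hadj u v h
    have hac' : (chordGraph d).IsAcyclic := hac.anti (hle.trans sdiff_le)
    have hnr : ¬ (chordGraph d).Reachable e.1 e.2 := by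
      intro h
      rw [SimpleGraph.isAcyclic_iff_forall_adj_isBridge] at hac
      have := hac ((chordGraph_adj _ hd e.1 e.2).2 (Or.inl (Finset.mem_insert_self _ _)))
      rw [SimpleGraph.isBridge_iff] at this
      exact this (h.mono hle)
    have ihd := ih hd' hx' hac'
    refine transGen_insert (RR ε d) (RR ε (insert e d)) e ?_ ?_ ?_ ihd ?_
    · rintro x y ⟨h1, h2, h3, h4⟩ hxe hye
      exact ⟨(Finset.mem_insert.1 h1).resolve_left hxe, (Finset.mem_insert.1 h2).resolve_left hye,
        h3, h4⟩
    · intro x h; exact he h.2.1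
    · intro h; exact h.2.2.1 rfl
    · rintro f g ⟨h1, h2, h3, h4⟩ ⟨h5, -, h7, h8⟩ hr
      have hf : f ∈ d := (Finset.mem_insert.1 h2).resolve_left h3.symm
      obtain ⟨hg, hreach⟩ := reach_of_RTG ε d hd' hx' f g hf hr
      by_cases hfg : f = g
      · subst hfg
        exact NN_asymm ε e f hed (hd' _ hf) h3 (hx _ h1 _ h2) h4 h8
      · have sf := NN_share ε e f hed (hd' _ hf) h3 (hx _ h1 _ h2) h4
        have sg := NN_share ε g e (hd' _ hg) hed h7 (hx _ h5 _ h1) h8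
        have key : ∀ v, (e.1 = v ∨ e.2 = v) → (f.1 = v ∨ f.2 = v) → (g.1 = v ∨ g.2 = v) → False := by
          intro v v1 v2 v3
          have := NN_trans ε v g e f (hd' _ hg) hed (hd' _ hf) h7 h3 (Ne.symm hfg) v3 v1 v2 h8 h4
          exact ihd g (Relation.TransGen.head' ⟨hg, hf, Ne.symm hfg, this⟩ hr)
        have er : ∀ c ∈ d, (chordGraph d).Reachable c.1 c.2 := fun c hc =>
          ((chordGraph_adj d hd' _ _).2 (Or.inl hc)).reachable
        have rf : ∀ v, (f.1 = v ∨ f.2 = v) → (chordGraph d).Reachable v f.1 := by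
          rintro v (rfl | rfl)
          · exact .refl _
          · exact (er f hf).symm
        have rg : ∀ v, (g.1 = v ∨ g.2 = v) → (chordGraph d).Reachable g.1 v := by
          rintro v (rfl | rfl)
          · exact .refl _
          · exact er g hg
        have sf' : (f.1 = e.1 ∨ f.2 = e.1) ∨ (f.1 = e.2 ∨ f.2 = e.2) := by
          unfold SharesEndpoint at sf; omega
        have sg' : (g.1 = e.1 ∨ g.2 = e.1) ∨ (g.1 = e.2 ∨ g.2 = e.2) := by
          unfold SharesEndpoint at sg; omega
        rcases sf' with sf | sf <;> rcases sg' with sg | sg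
        · exact key _ (Or.inl rfl) sf sg
        · exact hnr (((rf _ sf).trans hreach).trans (rg _ sg))
        · exact hnr (((rf _ sf).trans hreach).trans (rg _ sg)).symm
        · exact key _ (Or.inr rfl) sf sg

theorem enum_of_rel {α : Type*} (d : Finset α) (s : α → α → Prop) (hs : IsLinearOrder α s) :
    ∃ c : Fin d.card → α, Function.Injective c ∧ (∀ a, c a ∈ d) ∧ ∀ a b, a < b → s (c a) (c b) := by
  classical
  let lo : LinearOrder α :=
    { le := s
      le_refl := hs.refl
      le_trans := hs.trans
      le_antisymm := hs.antisymm
      le_total := hs.total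
      toDecidableLE := Classical.decRel _ }
  refine ⟨d.orderEmbOfFin rfl, (d.orderEmbOfFin rfl).injective,
    fun a => Finset.orderEmbOfFin_mem d rfl a, fun a b hab => ?_⟩
  exact (d.orderEmbOfFin rfl).monotone hab.le

theorem seq_of_diagram (ε : ℕ → Bool) (d : Finset (ℕ × ℕ)) (hd : ∀ c ∈ d, c.1 < c.2)
    (hx : ∀ c ∈ d, ∀ c' ∈ d, ¬ Crosses ε c c') (hac : (chordGraph d).IsAcyclic) :
    ∃ c : Fin d.card → ℕ × ℕ, Function.Injective c ∧ (∀ a, c a ∈ d) ∧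
      ∀ a b, a < b → ¬ NN ε (c b) (c a) := by
  have hT := acyclic_of_diagram ε d hd hx hac
  let r : ℕ × ℕ → ℕ × ℕ → Prop := Relation.ReflTransGen (RR ε d)
  have hr : IsPartialOrder (ℕ × ℕ) r :=
    { refl := fun _ => .refl
      trans := fun _ _ _ h1 h2 => Relation.ReflTransGen.trans h1 h2
      antisymm := fun a b h1 h2 => by
        by_contra hne
        rcases Relation.reflTransGen_iff_eq_or_transGen.1 h1 with h | h
        · exact hne h.symm
        · exact hT a (h.trans_left h2) }
  obtain ⟨s, hs, hrs⟩ := extend_partialOrder r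
  obtain ⟨c, hinj, hmem, hc⟩ := enum_of_rel d s hs
  refine ⟨c, hinj, hmem, ?_⟩
  intro a b hab hN
  have hne : c a ≠ c b := fun h => hab.ne (hinj h)
  have h1 : s (c a) (c b) := hc a b hab
  have h2 : s (c b) (c a) := hrs _ _ (.single ⟨hmem b, hmem a, hne.symm, hN⟩)
  exact hne (hs.antisymm _ _ h1 h2)

section reps

variable {n : ℕ} {ε : ℕ → Bool}

theorem extZero_of (A B : Rep K n ε)
    (h : ∀ δ : ∀ m, A.V (asrc ε m) →ₗ[K] B.V (atgt ε m), ∃ t : ∀ m, A.V m →ₗ[K] B.V m,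
      ∀ m, δ m = (B.φ m).comp (t (asrc ε m)) - (t (atgt ε m)).comp (A.φ m)) : extZero A B := by
  rintro ⟨E, f, g, ⟨hf, hg, hex⟩, hns⟩
  apply hns
  have h1 : ∀ m, ∃ s : A.V m →ₗ[K] E.V m, (g.app m).comp s = LinearMap.id := fun m =>
    (g.app m).exists_rightInverse_of_surjective (LinearMap.range_eq_top.2 (hg m))
  choose s hs using h1
  have h2 : ∀ m, ∃ r : E.V m →ₗ[K] B.V m, r.comp (f.app m) = LinearMap.id := fun m =>
    (f.app m).exists_leftInverse_of_injective (LinearMap.ker_eq_bot.2 (hf m))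
  choose r hr using h2
  have hs' : ∀ m x, g.app m (s m x) = x := fun m x => LinearMap.congr_fun (hs m) x
  have hr' : ∀ m x, r m (f.app m x) = x := fun m x => LinearMap.congr_fun (hr m) x
  have gc : ∀ m x, g.app (atgt ε m) (E.φ m x) = A.φ m (g.app (asrc ε m) x) := fun m x =>
    LinearMap.congr_fun (g.comm m) x
  have fc : ∀ m x, f.app (atgt ε m) (B.φ m x) = E.φ m (f.app (asrc ε m) x) := fun m x =>
    LinearMap.congr_fun (f.comm m) x
  obtain ⟨t, ht⟩ := h (fun m => (r (atgt ε m)).comp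
    ((E.φ m).comp (s (asrc ε m)) - (s (atgt ε m)).comp (A.φ m)))
  have gf : ∀ m x, g.app m (f.app m x) = 0 := fun m x => by
    have : f.app m x ∈ LinearMap.ker (g.app m) := by rw [← hex]; exact ⟨x, rfl⟩
    exact this
  refine ⟨⟨fun m => s m - (f.app m).comp (t m), fun m => ?_⟩, fun m => ?_⟩
  · ext x
    have h3 := LinearMap.congr_fun (ht m) x
    have h4 : E.φ m (s (asrc ε m) x) - s (atgt ε m) (A.φ m x) ∈ LinearMap.range (f.app (atgt ε m)) := by
      rw [hex, LinearMap.mem_ker, map_sub, gc, hs', hs', sub_self]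
    obtain ⟨b, hb⟩ := h4
    simp only [LinearMap.comp_apply, LinearMap.sub_apply, map_sub] at h3 ⊢
    rw [← map_sub, ← hb, hr'] at h3
    rw [h3, map_sub, fc] at hb
    rw [sub_eq_sub_iff_sub_eq_sub] at *
    rw [sub_eq_iff_eq_add] at hb ⊢
    rw [eq_comm, ← sub_eq_zero] at hb ⊢
    rw [← hb]; abel
  · ext x
    simp [hs', gf]

theorem extNonzero_of (A B : Rep K n ε)
    (δ : ∀ m, A.V (asrc ε m) →ₗ[K] B.V (atgt ε m))
    (h : ∀ t : ∀ m, A.V m →ₗ[K] B.V m,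
      ¬ ∀ m, δ m = (B.φ m).comp (t (asrc ε m)) - (t (atgt ε m)).comp (A.φ m)) :
    extNonzero A B := by
  let E : Rep K n ε :=
    { V := fun m => B.V m × A.V m
      instAdd := fun m => inferInstance
      instMod := fun m => inferInstance
      instFin := fun m => inferInstance
      triv := fun m hm => by
        have := A.triv m hm
        have := B.triv m hm
        exact inferInstanceAs (Subsingleton (B.V m × A.V m))
      φ := fun m => LinearMap.prod
        ((B.φ m).comp (LinearMap.fst K _ _) + (δ m).comp (LinearMap.snd K _ _))
        ((A.φ m).comp (LinearMap.snd K _ _)) }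
  let f : RepHom B E := ⟨fun m => LinearMap.inl K _ _, fun m => by
    apply LinearMap.ext; intro x
    simp [E]⟩
  let g : RepHom E A := ⟨fun m => LinearMap.snd K _ _, fun m => by
    apply LinearMap.ext; intro x
    simp [E]⟩
  refine ⟨E, f, g, ⟨fun m => LinearMap.inl_injective, fun m => LinearMap.snd_surjective,
    fun m => LinearMap.range_inl K _ _⟩, ?_⟩
  rintro ⟨s, hs⟩
  have hs2 : ∀ m x, (s.app m x).2 = x := fun m x => LinearMap.congr_fun (hs m) x
  refine h (fun m => - (LinearMap.fst K _ _).comp (s.app m)) fun m => ?_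
  apply LinearMap.ext; intro x
  have hc := congrArg Prod.fst (LinearMap.congr_fun (s.comm m) x)
  have hc' : (s.app (atgt ε m) (A.φ m x)).1 =
      B.φ m (s.app (asrc ε m) x).1 + δ m (s.app (asrc ε m) x).2 := hc
  rw [hs2] at hc'
  simp only [LinearMap.sub_apply, LinearMap.comp_apply, LinearMap.neg_apply, map_neg,
    LinearMap.fst_apply]
  rw [hc']
  abel

def inn (c : ℕ × ℕ) (m : ℕ) : Prop := c.1 < m ∧ m ≤ c.2

theorem XV_zero {i j m : ℕ} (h : ¬ inn (i, j) m) (x : XV K n i j m) : (x : K) = 0 := by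
  obtain ⟨x, hx⟩ := x
  unfold XV at hx
  rw [if_neg (by unfold inn at h; simp at h; omega)] at hx
  simpa using hx

theorem XV_mem {i j m : ℕ} (hj : j ≤ n) (h : inn (i, j) m) (x : K) : x ∈ XV K n i j m := by
  unfold XV
  rw [if_pos (by unfold inn at h; simp at h; omega)]
  trivial

theorem Xφ_coe {i j m : ℕ} (hj : j ≤ n) (h : inn (i, j) (atgt ε m))
    (x : XV K n i j (asrc ε m)) : ((Xφ K n ε i j m x : XV K n i j (atgt ε m)) : K) = x := by
  unfold Xφ
  rw [dif_pos (by unfold inn at h; simp at h; omega)]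
  rfl

open Classical in
noncomputable def mkS (n : ℕ) (s : K) (i j k l m m' : ℕ) (hl : l ≤ n) : XV K n i j m →ₗ[K] XV K n k l m' :=
  if h : inn (k, l) m' then
    LinearMap.codRestrict _ (s • (XV K n i j m).subtype) (fun x => XV_mem hl h _)
  else 0

theorem mkS_coe (s : K) {i j k l m m' : ℕ} (hl : l ≤ n) (h : inn (k, l) m') (x : XV K n i j m) :
    (mkS n s i j k l m m' hl x : K) = s * x := by
  unfold mkS
  rw [dif_pos h]
  rfl

theorem sc_exists {i j k l m m' : ℕ} (hj : j ≤ n) (f : XV K n i j m →ₗ[K] XV K n k l m') :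
    ∃ s : K, (∀ x, (f x : K) = s * x) ∧ (¬ (inn (i, j) m ∧ inn (k, l) m') → s = 0) := by
  by_cases h : inn (i, j) m
  · refine ⟨f ⟨1, XV_mem hj h 1⟩, fun x => ?_, fun h2 => XV_zero (fun h3 => h2 ⟨h, h3⟩) _⟩
    have : x = (x : K) • (⟨1, XV_mem hj h 1⟩ : XV K n i j m) := by
      ext; simp
    conv_lhs => rw [this, map_smul]
    simp [mul_comm]
  · refine ⟨0, fun x => ?_, fun _ => rfl⟩
    have : x = 0 := by ext; simpa using XV_zero h x
    rw [this]; simp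

variable {i j k l : ℕ}

theorem homZero_of (hj : j ≤ n) (hl : l ≤ n)
    (h : ∀ t : ℕ → K, (∀ m, ¬ (inn (i, j) m ∧ inn (k, l) m) → t m = 0) →
      (∀ m, inn (i, j) (asrc ε m) → inn (k, l) (atgt ε m) → t (asrc ε m) = t (atgt ε m)) →
      ∀ m, t m = 0) : homZero (Xrep K n ε i j) (Xrep K n ε k l) := by
  suffices H : ∀ A : ∀ m, XV K n i j m →ₗ[K] XV K n k l m,
      (∀ m, (A (atgt ε m)).comp (Xφ K n ε i j m) = (Xφ K n ε k l m).comp (A (asrc ε m))) →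
      ∀ m, A m = 0 from fun θ => H θ.app θ.comm
  intro A hA
  have h1 := fun m => sc_exists hj (A m)
  choose t ht ht0 using h1
  have h0 := h t ht0 (fun m hs htg => by
    have hc := congrArg Subtype.val (LinearMap.congr_fun (hA m) ⟨1, XV_mem hj hs 1⟩)
    rw [LinearMap.comp_apply, LinearMap.comp_apply, ht, Xφ_coe hl htg, ht] at hc
    by_cases h2 : inn (i, j) (atgt ε m)
    · rw [Xφ_coe hj h2] at hc
      simpa using hc.symm
    · rw [XV_zero h2] at hc
      rw [ht0 (atgt ε m) (fun h => h2 h.1)]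
      simpa using hc.symm)
  intro m
  apply LinearMap.ext
  intro x
  apply Subtype.ext
  rw [ht m x, h0 m]
  simp

theorem not_homZero_of (hj : j ≤ n) (hl : l ≤ n)
    (t : ℕ → K) (ht0 : ∀ m, ¬ (inn (i, j) m ∧ inn (k, l) m) → t m = 0)
    (ht : ∀ m, inn (i, j) (asrc ε m) → inn (k, l) (atgt ε m) → t (asrc ε m) = t (atgt ε m))
    (m : ℕ) (hm : t m ≠ 0) : ¬ homZero (Xrep K n ε i j) (Xrep K n ε k l) := by
  intro h
  have hcomm : ∀ m, (mkS n (t (atgt ε m)) i j k l _ _ hl).comp (Xφ K n ε i j m) =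
      (Xφ K n ε k l m).comp (mkS n (t (asrc ε m)) i j k l _ _ hl) := by
    intro m
    apply LinearMap.ext
    intro x
    apply Subtype.ext
    rw [LinearMap.comp_apply, LinearMap.comp_apply]
    by_cases h1 : inn (k, l) (atgt ε m)
    · rw [mkS_coe _ hl h1, Xφ_coe hl h1]
      by_cases h2 : inn (i, j) (asrc ε m)
      · have e := ht m h2 h1
        have e2 : (mkS n (t (asrc ε m)) i j k l _ (asrc ε m) hl x : K) = t (asrc ε m) * x := by
          by_cases h3 : inn (k, l) (asrc ε m)
          · rw [mkS_coe _ hl h3]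
          · rw [XV_zero h3, ht0 _ (fun h => h3 h.2)]; simp
        rw [e2, e]
        by_cases h3 : inn (i, j) (atgt ε m)
        · rw [Xφ_coe hj h3]
        · rw [ht0 _ (fun h => h3 h.1)]; simp
      · have : x = 0 := by apply Subtype.ext; simpa using XV_zero h2 x
        rw [this]; simp
    · rw [XV_zero h1, XV_zero h1]
  let θ : RepHom (Xrep K n ε i j) (Xrep K n ε k l) := ⟨fun m => mkS n (t m) i j k l m m hl, hcomm⟩
  have hin : inn (i, j) m ∧ inn (k, l) m := by
    by_contra h; exact hm (ht0 m h)
  have h1 : ((mkS n (t m) i j k l m m hl ⟨1, XV_mem hj hin.1 1⟩ : XV K n k l m) : K) = 0 := by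
    have := LinearMap.congr_fun (h θ m) (⟨1, XV_mem hj hin.1 1⟩ : XV K n i j m)
    exact congrArg Subtype.val this
  rw [mkS_coe _ hl hin.2] at h1
  simp at h1
  exact hm h1

theorem ext_eq_iff (hj : j ≤ n) (hl : l ≤ n) (m : ℕ) (δ : XV K n i j (asrc ε m) →ₗ[K] XV K n k l (atgt ε m))
    (t : XV K n i j (asrc ε m) →ₗ[K] XV K n k l (asrc ε m))
    (t' : XV K n i j (atgt ε m) →ₗ[K] XV K n k l (atgt ε m)) (d s s' : K)
    (hd : ∀ x, inn (k, l) (atgt ε m) → (δ x : K) = d * x)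
    (hs : ∀ x, inn (k, l) (asrc ε m) → (t x : K) = s * x)
    (hs' : ∀ x, inn (k, l) (atgt ε m) → (t' x : K) = s' * x)
    (hs0 : ¬ (inn (i, j) (asrc ε m) ∧ inn (k, l) (asrc ε m)) → s = 0)
    (hs0' : ¬ (inn (i, j) (atgt ε m) ∧ inn (k, l) (atgt ε m)) → s' = 0) :
    δ = (Xφ K n ε k l m).comp t - t'.comp (Xφ K n ε i j m) ↔
      (inn (i, j) (asrc ε m) → inn (k, l) (atgt ε m) → d = s - s') := by
  have key : ∀ x : XV K n i j (asrc ε m), inn (k, l) (atgt ε m) →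
      ((((Xφ K n ε k l m).comp t - t'.comp (Xφ K n ε i j m)) x : XV K n k l (atgt ε m)) : K)
        = (s - s') * x := by
    intro x h1
    rw [LinearMap.sub_apply, Submodule.coe_sub, LinearMap.comp_apply, LinearMap.comp_apply,
      Xφ_coe hl h1, hs' _ h1]
    by_cases h2 : inn (i, j) (asrc ε m)
    · have e2 : (t x : K) = s * x := by
        by_cases h3 : inn (k, l) (asrc ε m)
        · exact hs x h3
        · rw [XV_zero h3, hs0 (fun h => h3 h.2)]; simp
      rw [e2]
      by_cases h3 : inn (i, j) (atgt ε m)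
      · rw [Xφ_coe hj h3]; ring
      · rw [hs0' (fun h => h3 h.1)]; ring
    · have : x = 0 := by apply Subtype.ext; simpa using XV_zero h2 x
      rw [this]; simp
  constructor
  · intro h h1 h2
    have h3 := hd ⟨1, XV_mem hj h1 1⟩ h2
    rw [h, key _ h2] at h3
    simpa using h3.symm
  · intro h
    apply LinearMap.ext
    intro x
    apply Subtype.ext
    by_cases h2 : inn (k, l) (atgt ε m)
    · rw [key x h2, hd x h2]
      by_cases h1 : inn (i, j) (asrc ε m)
      · rw [h h1 h2]
      · rw [XV_zero h1]; simp
    · rw [XV_zero h2, XV_zero h2]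

theorem extZero_X (hj : j ≤ n) (hl : l ≤ n)
    (h : ∀ δ : ℕ → K, ∃ t : ℕ → K, (∀ m, ¬ (inn (i, j) m ∧ inn (k, l) m) → t m = 0) ∧
      ∀ m, inn (i, j) (asrc ε m) → inn (k, l) (atgt ε m) → δ m = t (asrc ε m) - t (atgt ε m)) :
    extZero (Xrep K n ε i j) (Xrep K n ε k l) := by
  apply extZero_of
  suffices H : ∀ δ : ∀ m, XV K n i j (asrc ε m) →ₗ[K] XV K n k l (atgt ε m),
      ∃ t : ∀ m, XV K n i j m →ₗ[K] XV K n k l m,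
      ∀ m, δ m = (Xφ K n ε k l m).comp (t (asrc ε m)) - (t (atgt ε m)).comp (Xφ K n ε i j m) from H
  intro δ
  have h1 := fun m => sc_exists hj (δ m)
  choose d hd hd0 using h1
  obtain ⟨t, ht0, ht⟩ := h d
  refine ⟨fun m => mkS n (t m) i j k l m m hl, fun m => ?_⟩
  exact (ext_eq_iff hj hl m (δ m) (mkS n _ i j k l _ _ hl) (mkS n _ i j k l _ _ hl) (d m) (t (asrc ε m)) (t (atgt ε m))
    (fun x _ => hd m x) (fun x hx => mkS_coe _ hl hx x) (fun x hx => mkS_coe _ hl hx x)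
    (ht0 _) (ht0 _)).2 (ht m)

theorem not_extZero_X (hj : j ≤ n) (hl : l ≤ n) (δ : ℕ → K)
    (h : ∀ t : ℕ → K, (∀ m, ¬ (inn (i, j) m ∧ inn (k, l) m) → t m = 0) →
      (∀ m, inn (i, j) (asrc ε m) → inn (k, l) (atgt ε m) → δ m = t (asrc ε m) - t (atgt ε m)) →
      False) :
    ¬ extZero (Xrep K n ε i j) (Xrep K n ε k l) := by
  rw [extZero, not_not]
  apply extNonzero_of _ _ (fun m => mkS n (δ m) i j k l (asrc ε m) (atgt ε m) hl)
  suffices H : ∀ t : ∀ m, XV K n i j m →ₗ[K] XV K n k l m,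
      ¬ ∀ m, mkS n (δ m) i j k l (asrc ε m) (atgt ε m) hl =
        (Xφ K n ε k l m).comp (t (asrc ε m)) - (t (atgt ε m)).comp (Xφ K n ε i j m) from H
  intro t ht
  have h1 := fun m => sc_exists hj (t m)
  choose s hs hs0 using h1
  refine h s hs0 fun m => ?_
  exact (ext_eq_iff hj hl m (mkS n _ i j k l _ _ hl) (t (asrc ε m)) (t (atgt ε m)) (δ m) (s (asrc ε m)) (s (atgt ε m))
    (fun x hx => mkS_coe _ hl hx x) (fun x _ => hs _ x) (fun x _ => hs _ x)
    (hs0 _) (hs0 _)).1 (ht m)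

end reps

section comb

variable {n : ℕ} {ε : ℕ → Bool} {i j k l : ℕ}

/-- arrow set -/
def SS (ε : ℕ → Bool) (i j k l m : ℕ) : Prop :=
  inn (i, j) (asrc ε m) ∧ inn (k, l) (atgt ε m)

theorem SS_iff (m : ℕ) : SS ε i j k l m ↔
    (ε m = true ∧ i < m ∧ m ≤ j ∧ k < m + 1 ∧ m + 1 ≤ l) ∨
    (ε m = false ∧ i < m + 1 ∧ m + 1 ≤ j ∧ k < m ∧ m ≤ l) := by
  unfold SS inn asrc atgt
  cases h : ε m <;> simp [and_assoc]

theorem SS_mid (m : ℕ) (h1 : max i k < m) (h2 : m < min j l) : SS ε i j k l m := by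
  rw [SS_iff]
  cases h : ε m <;> simp <;> omega

theorem SS_left (hov : max i k < min j l) (h : ¬ Lok ε (i, j) (k, l)) : SS ε i j k l (max i k) := by
  rw [SS_iff]
  simp only [Lok] at h
  rcases lt_trichotomy i k with h1 | h1 | h1
  · rw [max_eq_right h1.le] at *
    cases h2 : ε k <;> simp_all <;> omega
  · simp_all
  · rw [max_eq_left h1.le] at *
    cases h2 : ε i <;> simp_all <;> omega

theorem SS_right (hov : max i k < min j l) (h : ¬ Rok ε (i, j) (k, l)) : SS ε i j k l (min j l) := by
  rw [SS_iff]
  simp only [Rok] at h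
  rcases lt_trichotomy j l with h1 | h1 | h1
  · rw [min_eq_left h1.le] at *
    cases h2 : ε j <;> simp_all <;> omega
  · simp_all
  · rw [min_eq_right h1.le] at *
    cases h2 : ε l <;> simp_all <;> omega

theorem SS_bd (m : ℕ) (hov : max i k < min j l) (h : SS ε i j k l m) :
    max i k ≤ m ∧ m ≤ min j l ∧ (m = max i k → ¬ Lok ε (i, j) (k, l)) ∧
      (m = min j l → ¬ Rok ε (i, j) (k, l)) := by
  rw [SS_iff] at h
  refine ⟨by omega, by omega, ?_, ?_⟩
  · intro hm hL
    simp only [Lok] at hL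
    rcases hL with hL | ⟨h1, h2⟩ | ⟨h1, h2⟩
    · omega
    · rw [max_eq_right h1.le] at hm
      subst hm; simp [h2] at h <;> omega
    · rw [max_eq_left h1.le] at hm
      subst hm; simp [h2] at h <;> omega
  · intro hm hL
    simp only [Rok] at hL
    rcases hL with hL | ⟨h1, h2⟩ | ⟨h1, h2⟩
    · omega
    · rw [min_eq_right h1.le] at hm
      subst hm; simp [h2] at h <;> omega
    · rw [min_eq_left h1.le] at hm
      subst hm; simp [h2] at h <;> omega

theorem SS_adj (m : ℕ) (hij : i < j) (hkl : k < l) (hov : ¬ Ov (i, j) (k, l)) (h : SS ε i j k l m) :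
    EN ε (i, j) (k, l) := by
  rw [SS_iff] at h
  simp only [Ov] at hov
  right
  rcases h with ⟨h1, h⟩ | ⟨h1, h⟩
  · left
    have : m = j := by omega
    subst this
    exact ⟨by simp only; omega, h1⟩
  · right
    have : m = i := by omega
    subst this
    exact ⟨by simp only; omega, h1⟩

theorem src_tgt (t : ℕ → K) (m : ℕ) (h : t (asrc ε m) = t (atgt ε m)) : t m = t (m + 1) := by
  unfold asrc atgt at h
  cases h1 : ε m <;> simp [h1] at h <;> simp [h]

theorem const_up (t : ℕ → K) (p q : ℕ) (h : ∀ m, p ≤ m → m < q → t m = t (m + 1)) :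
    ∀ m, p ≤ m → m ≤ q → t m = t p := by
  intro m hm
  induction m, hm using Nat.le_induction with
  | base => intro _; rfl
  | succ m hm ih =>
    intro h1
    rw [← h m hm (by omega)]
    exact ih (by omega)

theorem homZero_iff (hij : i < j) (hkl : k < l) (hj : j ≤ n) (hl : l ≤ n) :
    homZero (Xrep K n ε i j) (Xrep K n ε k l) ↔ ¬ HN ε (i, j) (k, l) := by
  constructor
  · rintro h ⟨⟨h1, h2⟩, hL, hR⟩
    simp only at h1 h2
    have hov : max i k < min j l := by omega
    refine not_homZero_of hj hl (fun m => if max i k < m ∧ m ≤ min j l then (1 : K) else 0) ?_ ?_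
      (min j l) ?_ h
    · intro m hm
      simp only [inn] at hm
      rw [if_neg (by omega)]
    · intro m hs ht
      obtain ⟨h3, h4, h5, h6⟩ := SS_bd m hov ⟨hs, ht⟩
      have h7 : m ≠ max i k := fun h => h5 h hL
      have h8 : m ≠ min j l := fun h => h6 h hR
      rw [if_pos, if_pos]
      · unfold atgt; split <;> omega
      · unfold asrc; split <;> omega
    · rw [if_pos (by omega)]; exact one_ne_zero
  · intro h
    apply homZero_of hj hl
    intro t ht0 ht m
    by_cases hov : max i k < min j l
    · have hmid : ∀ m, SS ε i j k l m → t m = t (m + 1) := fun m hm => src_tgt t m (ht m hm.1 hm.2)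
      have hp : t (max i k) = 0 := ht0 _ (by simp only [inn]; omega)
      have hq : t (min j l + 1) = 0 := ht0 _ (by simp only [inn]; omega)
      by_cases hm : max i k < m ∧ m ≤ min j l
      · by_cases hL : Lok ε (i, j) (k, l)
        · have hR : ¬ Rok ε (i, j) (k, l) := fun hR => h ⟨⟨by simp only; omega, by simp only; omega⟩, hL, hR⟩
          have := const_up t m (min j l + 1) (fun r h1 h2 => hmid r (by
            rcases Nat.lt_or_ge r (min j l) with h3 | h3
            · exact SS_mid r (by omega) h3
            · have : r = min j l := by omega
              rw [this]; exact SS_right hov hR)) (min j l + 1) (by omega) le_rfl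
          rw [← this, hq]
        · have := const_up t (max i k) (min j l) (fun r h1 h2 => hmid r (by
            rcases Nat.lt_or_ge (max i k) r with h3 | h3
            · exact SS_mid r h3 h2
            · have : r = max i k := by omega
              rw [this]; exact SS_left hov hL)) m (by omega) hm.2
          rw [this, hp]
      · exact ht0 _ (by simp only [inn]; omega)
    · exact ht0 _ (by simp only [inn]; omega)

theorem extZero_iff (hij : i < j) (hkl : k < l) (hj : j ≤ n) (hl : l ≤ n) :
    extZero (Xrep K n ε i j) (Xrep K n ε k l) ↔ ¬ EN ε (i, j) (k, l) := by
  constructor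
  · rintro h (⟨⟨h1, h2⟩, hL, hR⟩ | hadj)
    · simp only at h1 h2
      have hov : max i k < min j l := by omega
      refine not_extZero_X hj hl (fun m => if m = max i k then (1 : K) else 0) ?_ h
      intro t ht0 ht
      have hp : t (max i k) = 0 := ht0 _ (by simp only [inn]; omega)
      have hq : t (min j l + 1) = 0 := ht0 _ (by simp only [inn]; omega)
      have := const_up t (max i k + 1) (min j l + 1) (fun r h1 h2 => by
        have hS : SS ε i j k l r := by
          rcases Nat.lt_or_ge r (min j l) with h3 | h3
          · exact SS_mid r (by omega) h3
          · have : r = min j l := by omega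
            rw [this]; exact SS_right hov hR
        have h3 := ht r hS.1 hS.2
        rw [if_neg (by omega)] at h3
        exact src_tgt t r (sub_eq_zero.1 h3.symm)) (min j l + 1) (by omega) le_rfl
      have hS := SS_left hov hL
      have h3 := ht _ hS.1 hS.2
      rw [if_pos rfl] at h3
      unfold asrc atgt at h3
      rw [hq] at this
      split at h3 <;> simp [← this, hp] at h3
    · refine not_extZero_X hj hl (fun m => (1 : K)) ?_ h
      intro t ht0 ht
      have hno : ∀ m, t m = 0 := fun m => ht0 m (by
        simp only [inn]; rcases hadj with h | h <;> simp only at h <;> omega)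
      have : ∃ m, SS ε i j k l m := by
        rcases hadj with ⟨h1, h2⟩ | ⟨h1, h2⟩
        · exact ⟨j, by rw [SS_iff]; simp only at h1 h2; left; exact ⟨h2, by omega⟩⟩
        · exact ⟨i, by rw [SS_iff]; simp only at h1 h2; right; exact ⟨h2, by omega⟩⟩
      obtain ⟨m, hm⟩ := this
      have := ht m hm.1 hm.2
      rw [hno, hno] at this
      simp at this
  · intro h
    apply extZero_X hj hl
    intro δ
    by_cases hov : max i k < min j l
    · let σ : ℕ → K := fun m => if ε m then - δ m else δ m
      have conv : ∀ (t : ℕ → K) m, t (m + 1) - t m = σ m → δ m = t (asrc ε m) - t (atgt ε m) := by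
        intro t m h
        simp only [σ] at h
        unfold asrc atgt
        cases h1 : ε m <;> simp [h1] at h <;> simp
        · exact h.symm
        · rw [← neg_eq_iff_eq_neg] at h
          rw [← h]; ring
      by_cases hR : Rok ε (i, j) (k, l)
      · refine ⟨fun m => if max i k < m ∧ m ≤ min j l then ∑ r ∈ Finset.Ico (max i k) m, σ r else 0,
          fun m hm => by simp only [inn] at hm; exact if_neg (by omega), fun m hs ht => ?_⟩
        obtain ⟨h3, h4, h5, h6⟩ := SS_bd m hov ⟨hs, ht⟩
        have h8 : m ≠ min j l := fun h => h6 h hR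
        refine conv (fun m => if max i k < m ∧ m ≤ min j l then ∑ r ∈ Finset.Ico (max i k) m, σ r else 0) m ?_
        rw [if_pos (by omega), Finset.sum_Ico_succ_top h3]
        split
        · ring
        · have : m = max i k := by omega
          rw [this]; simp
      · have hL : Lok ε (i, j) (k, l) := by
          by_contra hL
          exact h (Or.inl ⟨⟨by simp only; omega, by simp only; omega⟩, hL, hR⟩)
        refine ⟨fun m => if max i k < m ∧ m ≤ min j l then - ∑ r ∈ Finset.Ico m (min j l + 1), σ r else 0,
          fun m hm => by simp only [inn] at hm; exact if_neg (by omega), fun m hs ht => ?_⟩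
        obtain ⟨h3, h4, h5, h6⟩ := SS_bd m hov ⟨hs, ht⟩
        have h8 : m ≠ max i k := fun h => h5 h hL
        refine conv (fun m => if max i k < m ∧ m ≤ min j l then - ∑ r ∈ Finset.Ico m (min j l + 1), σ r else 0) m ?_
        rw [if_pos (c := max i k < m ∧ m ≤ min j l) (by omega), Finset.sum_eq_sum_Ico_succ_bot (show m < min j l + 1 by omega)]
        split
        · ring
        · have : m = min j l := by omega
          rw [this]; simp
    · refine ⟨0, fun _ _ => rfl, fun m hs ht => ?_⟩
      exact absurd (SS_adj m hij hkl (fun h => hov (by simp only [Ov] at h; omega)) ⟨hs, ht⟩) h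

theorem excPair_iff (c d : ℕ × ℕ) (hc : c.1 < c.2 ∧ c.2 ≤ n) (hd : d.1 < d.2 ∧ d.2 ≤ n) :
    ExcPair (Xrep K n ε c.1 c.2) (Xrep K n ε d.1 d.2) ↔ ¬ NN ε d c := by
  unfold ExcPair NN
  rw [homZero_iff hd.1 hc.1 hd.2 hc.2, extZero_iff hd.1 hc.1 hd.2 hc.2]
  tauto

theorem main_iff (K : Type) [Field K] (n : ℕ) (ε : ℕ → Bool) (d : Finset (ℕ × ℕ))
    (hd : ∀ c ∈ d, c.1 < c.2 ∧ c.2 ≤ n) :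
    IsExcColl K n ε d ↔
        ((∀ c ∈ d, ∀ c' ∈ d, ¬ Crosses ε c c') ∧ (chordGraph d).IsAcyclic) := by
  have hd' : ∀ c ∈ d, c.1 < c.2 := fun c hc => (hd c hc).1
  constructor
  · rintro ⟨c, hinj, hmem, hseq⟩
    have hN : ∀ a b, a < b → ¬ NN ε (c b) (c a) := fun a b hab =>
      (excPair_iff (c a) (c b) (hd _ (hmem a)) (hd _ (hmem b))).1 (hseq a b hab)
    refine ⟨?_, forest_of_seq ε d hd' c hinj hmem hN⟩
    have himg : Finset.univ.image c = d := by
      apply Finset.eq_of_subset_of_card_le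
      · intro x hx
        obtain ⟨a, _, rfl⟩ := Finset.mem_image.1 hx
        exact hmem a
      · rw [Finset.card_image_of_injective _ hinj]; simp
    intro x hx y hy hxy
    rw [← himg, Finset.mem_image] at hx hy
    obtain ⟨a, _, rfl⟩ := hx
    obtain ⟨b, _, rfl⟩ := hy
    obtain ⟨h1, h2⟩ := cross_NN ε _ _ hxy
    rcases lt_trichotomy a b with h | h | h
    · exact hN a b h h2
    · subst h
      simp only [Crosses] at hxy
      omega
    · exact hN b a h h1
  · rintro ⟨hx, hac⟩
    obtain ⟨c, hinj, hmem, hN⟩ := seq_of_diagram ε d hd' hx hac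
    exact ⟨c, hinj, hmem, fun a b hab =>
      (excPair_iff (c a) (c b) (hd _ (hmem a)) (hd _ (hmem b))).2 (hN a b hab)⟩

end comb

/-- Theorem 3.6: a set of pairwise distinct indecomposables is an exceptional collection iff
the corresponding set of chords is a strand diagram; consequently `X_{i,j} ↦ {i,j}` induces a
bijection from exceptional collections with `k` elements to strand diagrams with `k` strands. -/
theorem exceptional_collections_are_strand_diagrams (K : Type) [Field K]
    (n k : ℕ) (ε : ℕ → Bool) (hk : k ≤ n) :
    (∀ d : Finset (ℕ × ℕ), d.card = k → (∀ c ∈ d, c.1 < c.2 ∧ c.2 ≤ n) →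
      (IsExcColl K n ε d ↔
        ((∀ c ∈ d, ∀ c' ∈ d, ¬ Crosses ε c c') ∧ (chordGraph d).IsAcyclic))) ∧
    {d : Finset (ℕ × ℕ) | d.card = k ∧ (∀ c ∈ d, c.1 < c.2 ∧ c.2 ≤ n) ∧ IsExcColl K n ε d} =
      {d : Finset (ℕ × ℕ) | d.card = k ∧ IsDiagram n ε d} := by
  refine ⟨fun d _ hd => main_iff K n ε d hd, ?_⟩
  ext d
  constructor
  · rintro ⟨h1, h2, h3⟩
    exact ⟨h1, h2, (main_iff K n ε d h2).1 h3⟩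
  · rintro ⟨h1, h2, h3⟩
    exact ⟨h1, h2, (main_iff K n ε d h2).2 h3⟩

end ESPaper
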